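/- The generalized periodic KLS generator, with jump rates r_k(η) = η_k(1-η_{k+1})[r(1+κ) + r(ε-κ)η_{k-1} - r(ε+κ)η_{k+2}] and ℓ_{k+1}(η) = (1-η_k)η_{k+1}[ℓ(1+λ) - ℓ(ε+λ)η_{k-1} + ℓ(ε-λ)η_{k+2}], leaves the Ising measure π*(η) ∝ exp(-J Σ_k η_k η_{k+1} + φ Σ_k η_k) invariant on the torus Z/LZ, for every φ ∈ ℝ, provided e^{-J} = (1-ε)/(1+ε). -/

import Mathlib

open Finset

/-!
Exchanging the occupations `b`, `c` of the sites `k`, `k + 1` only affects the bonds between the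
four sites `k - 1, …, k + 2`, so the difference between probability inflow and outflow across a
bond is the weight of the configuration times a function of four occupations `a, b, c, d`. For the
KLS rates this function is a discrete gradient `h b c d - h a b c`, and gradients sum to zero
around the torus. The relation `y * (1 + ε) = 1 - ε` is what the gradient condition demands of
jumps that change the number of neighbouring pairs. Left jumps are right jumps seen in a mirror,
and `h` is mirror-symmetric, so they contribute minus a gradient of the same kind.
-/

namespace KLS

section ExchangeDynamics

theorem sum_mul_generator_eq_zero {R Ω ι : Type*} [Ring R] [Fintype Ω] [Fintype ι]
    (σ : ι → Equiv.Perm Ω) (W : Ω → R) (c : ι → Ω → R)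
    (hflow : ∀ η, ∑ i, (W ((σ i).symm η) * c i ((σ i).symm η) - W η * c i η) = 0) (f : Ω → R) :
    ∑ η, W η * ∑ i, c i η * (f (σ i η) - f η) = 0 := by
  have inflow (i : ι) : ∑ η, W η * c i η * f (σ i η) =
      ∑ η, W ((σ i).symm η) * c i ((σ i).symm η) * f η := by
    simpa only [Equiv.symm_apply_apply] using
      Equiv.sum_comp (σ i) fun η => W ((σ i).symm η) * c i ((σ i).symm η) * f η
  calc ∑ η, W η * ∑ i, c i η * (f (σ i η) - f η)
      = ∑ i, (∑ η, W η * c i η * f (σ i η) - ∑ η, W η * c i η * f η) := by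
        simp only [mul_sum, mul_sub, mul_assoc, ← sum_sub_distrib]
        exact sum_comm
    _ = ∑ η, (∑ i, (W ((σ i).symm η) * c i ((σ i).symm η) - W η * c i η)) * f η := by
        simp only [inflow, ← sum_sub_distrib, ← sub_mul, sum_mul]
        exact sum_comm
    _ = 0 := by simp only [hflow, zero_mul, sum_const_zero]

variable {L : ℕ} {α : Type*}

theorem two_ne_zero_of_three_le (hL : 3 ≤ L) : (2 : ZMod L) ≠ 0 :=
  mod_cast (ZMod.natCast_eq_zero_iff 2 L).not.2 (Nat.not_dvd_of_pos_of_lt two_pos hL)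

theorem one_ne_zero_of_three_le (hL : 3 ≤ L) : (1 : ZMod L) ≠ 0 := fun h =>
  two_ne_zero_of_three_le hL (by linear_combination 2 * h)

theorem comp_swap_involutive {ι : Type*} [DecidableEq ι] (i j : ι) :
    Function.Involutive fun η : ι → α => η ∘ Equiv.swap i j := fun η => by
  simp only [Function.comp_assoc, ← Equiv.coe_trans, Equiv.swap_swap, Equiv.coe_refl,
    Function.comp_id]

theorem sub_one_ne_self (hL : 3 ≤ L) (k : ZMod L) : k - 1 ≠ k := fun h =>
  one_ne_zero_of_three_le hL (by linear_combination -h)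

theorem sub_one_ne_add_one (hL : 3 ≤ L) (k : ZMod L) : k - 1 ≠ k + 1 := fun h =>
  two_ne_zero_of_three_le hL (by linear_combination -h)

theorem swap_apply_sub_one (hL : 3 ≤ L) (k : ZMod L) : Equiv.swap k (k + 1) (k - 1) = k - 1 :=
  Equiv.swap_apply_of_ne_of_ne (sub_one_ne_self hL k) (sub_one_ne_add_one hL k)

theorem swap_apply_add_two (hL : 3 ≤ L) (k : ZMod L) : Equiv.swap k (k + 1) (k + 2) = k + 2 :=
  Equiv.swap_apply_of_ne_of_ne
    (fun h => two_ne_zero_of_three_le hL (by linear_combination h))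
    (fun h => one_ne_zero_of_three_le hL (by linear_combination h))

variable [NeZero L]

theorem sum_add_one_sub_eq_zero {M : Type*} [AddCommGroup M] (G : ZMod L → M) :
    ∑ k, (G (k + 1) - G k) = 0 := by
  rw [sum_sub_distrib, sub_eq_zero]
  exact Equiv.sum_comp (Equiv.addRight 1) G

theorem prod_eq_prod_compl_mul_three {M : Type*} [CommMonoid M] (hL : 3 ≤ L) (t : ZMod L → M)
    (k : ZMod L) :
    ∏ j, t j = (∏ j ∈ {k - 1, k, k + 1}ᶜ, t j) * (t (k - 1) * t k * t (k + 1)) := by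
  have sub_one_notMem : k - 1 ∉ ({k, k + 1} : Finset (ZMod L)) := by
    simpa only [mem_insert, mem_singleton, not_or] using
      ⟨sub_one_ne_self hL k, sub_one_ne_add_one hL k⟩
  have notMem_add_one : k ∉ ({k + 1} : Finset (ZMod L)) := by
    simpa only [mem_singleton, left_eq_add] using one_ne_zero_of_three_le hL
  rw [← prod_compl_mul_prod {k - 1, k, k + 1} t, prod_insert sub_one_notMem,
    prod_insert notMem_add_one, prod_singleton, mul_assoc (t _)]

theorem prod_bonds_eq_prod_compl_mul {M : Type*} [CommMonoid M] (hL : 3 ≤ L) (w : α → α → M)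
    (η : ZMod L → α) (k : ZMod L) :
    ∏ j, w (η j) (η (j + 1)) = (∏ j ∈ {k - 1, k, k + 1}ᶜ, w (η j) (η (j + 1))) *
      (w (η (k - 1)) (η k) * w (η k) (η (k + 1)) * w (η (k + 1)) (η (k + 2))) := by
  rw [prod_eq_prod_compl_mul_three hL _ k, sub_add_cancel, add_assoc k, one_add_one_eq_two]

theorem prod_compl_bonds_comp_swap {M : Type*} [CommMonoid M] (w : α → α → M)
    (η : ZMod L → α) (k : ZMod L) :
    ∏ j ∈ {k - 1, k, k + 1}ᶜ,
        w ((η ∘ Equiv.swap k (k + 1)) j) ((η ∘ Equiv.swap k (k + 1)) (j + 1)) =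
      ∏ j ∈ {k - 1, k, k + 1}ᶜ, w (η j) (η (j + 1)) := by
  refine prod_congr rfl fun j hj => ?_
  simp only [mem_compl, mem_insert, mem_singleton, not_or] at hj
  obtain ⟨ne_sub_one, ne_self, ne_add_one⟩ := hj
  have fixed_left : Equiv.swap k (k + 1) j = j := Equiv.swap_apply_of_ne_of_ne ne_self ne_add_one
  have fixed_right : Equiv.swap k (k + 1) (j + 1) = j + 1 :=
    Equiv.swap_apply_of_ne_of_ne (fun h => ne_sub_one (eq_sub_of_add_eq h))
      (fun h => ne_self (add_right_cancel h))
  simp only [Function.comp_apply, fixed_left, fixed_right]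

theorem sum_prod_bonds_mul_generator_eq_zero_of_gradient {R : Type*} [CommRing R] [Fintype α]
    (hL : 3 ≤ L) (w : α → α → R) (rate : α → α → α → α → R) (h : α → α → α → R)
    (hgrad : ∀ a b c d, w a c * w c b * w b d * rate a c b d - w a b * w b c * w c d * rate a b c d
      = w a b * w b c * w c d * (h b c d - h a b c))
    (f : (ZMod L → α) → R) :
    ∑ η : ZMod L → α, (∏ k, w (η k) (η (k + 1))) *
      ∑ k, rate (η (k - 1)) (η k) (η (k + 1)) (η (k + 2)) *
        (f (η ∘ Equiv.swap k (k + 1)) - f η) = 0 := by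
  let W : (ZMod L → α) → R := fun η => ∏ k, w (η k) (η (k + 1))
  let c : ZMod L → (ZMod L → α) → R := fun k η =>
    rate (η (k - 1)) (η k) (η (k + 1)) (η (k + 2))
  let G : (ZMod L → α) → ZMod L → R := fun η k => h (η (k - 1)) (η k) (η (k + 1))
  have netFlow (η : ZMod L → α) (k : ZMod L) :
      W (η ∘ Equiv.swap k (k + 1)) * c k (η ∘ Equiv.swap k (k + 1)) - W η * c k η =
        W η * (G η (k + 1) - G η k) := by
    simp only [W, c, G, prod_bonds_eq_prod_compl_mul hL w _ k, prod_compl_bonds_comp_swap]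
    simp only [Function.comp_apply, Equiv.swap_apply_left, Equiv.swap_apply_right,
      swap_apply_sub_one hL, swap_apply_add_two hL, add_sub_cancel_right, add_assoc k 1 1,
      one_add_one_eq_two]
    linear_combination (∏ j ∈ {k - 1, k, k + 1}ᶜ, w (η j) (η (j + 1))) *
      hgrad (η (k - 1)) (η k) (η (k + 1)) (η (k + 2))
  refine sum_mul_generator_eq_zero (fun k => (comp_swap_involutive k (k + 1)).toPerm) W c
    (fun η => ?_) f
  calc ∑ k, (W (η ∘ Equiv.swap k (k + 1)) * c k (η ∘ Equiv.swap k (k + 1)) - W η * c k η)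
      = W η * ∑ k, (G η (k + 1) - G η k) := by simp only [netFlow, mul_sum]
    _ = 0 := by rw [sum_add_one_sub_eq_zero, mul_zero]

end ExchangeDynamics

section Rates

variable {R : Type*} [CommRing R]

/-- The occupation number of a site, as a scalar. -/
def occ (b : Bool) : R := if b then 1 else 0

/-- The factor contributed to the Ising weight by a bond with end occupations `a` and `b`. The
fugacity `x ^ 2` of a particle is shared equally between the two bonds at its site, and `y` is the
weight of a pair of neighbouring particles. -/
def bondWeight (x y : R) (a b : Bool) : R :=
  (if a then x else 1) * (if b then x else 1) * (if a && b then y else 1)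

/-- The KLS rate of a jump to the right across the middle bond of four consecutive sites with
occupations `a b c d`. -/
def rightRate (r ε κ : R) (a b c d : Bool) : R :=
  occ b * (1 - occ c) * (r * (1 + κ) + r * (ε - κ) * occ a - r * (ε + κ) * occ d)

/-- The KLS rate of a jump to the left across the middle bond of four consecutive sites with
occupations `a b c d`. -/
def leftRate (l ε lam : R) (a b c d : Bool) : R :=
  (1 - occ b) * occ c * (l * (1 + lam) - l * (ε + lam) * occ a + l * (ε - lam) * occ d)

/-- The function of three consecutive occupations whose discrete gradient is the net flow of
probability caused by the jumps to the right. -/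
def flowPotential (r ε κ : R) : Bool → Bool → Bool → R
  | false, true, false => r * (1 + κ)
  | _, true, _ => r * (1 + ε)
  | true, false, true => r * (ε + κ)
  | _, false, _ => 0

theorem bondWeight_comm (x y : R) (a b : Bool) : bondWeight x y a b = bondWeight x y b a := by
  simp only [bondWeight, mul_comm, Bool.and_comm]

theorem leftRate_eq_rightRate_reverse (l ε lam : R) (a b c d : Bool) :
    leftRate l ε lam a b c d = rightRate l ε lam d c b a := by
  simp only [leftRate, rightRate]
  ring

theorem flowPotential_reverse (r ε κ : R) (a b c : Bool) :
    flowPotential r ε κ a b c = flowPotential r ε κ c b a := by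
  cases a <;> cases b <;> cases c <;> rfl

theorem rightRate_netFlow {x y ε : R} (hy : y * (1 + ε) = 1 - ε) (r κ : R) (a b c d : Bool) :
    bondWeight x y a c * bondWeight x y c b * bondWeight x y b d * rightRate r ε κ a c b d -
        bondWeight x y a b * bondWeight x y b c * bondWeight x y c d * rightRate r ε κ a b c d =
      bondWeight x y a b * bondWeight x y b c * bondWeight x y c d *
        (flowPotential r ε κ b c d - flowPotential r ε κ a b c) := by
  cases a <;> cases b <;> cases c <;> cases d <;>
    simp only [bondWeight, rightRate, flowPotential, occ, Bool.and_true, Bool.and_false,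
      Bool.false_eq_true, if_true, if_false] <;>
    first
    | ring1
    | linear_combination (x ^ 3 * r) * hy
    | linear_combination (-(x ^ 3 * r)) * hy

theorem leftRate_netFlow {x y ε : R} (hy : y * (1 + ε) = 1 - ε) (l lam : R) (a b c d : Bool) :
    bondWeight x y a c * bondWeight x y c b * bondWeight x y b d * leftRate l ε lam a c b d -
        bondWeight x y a b * bondWeight x y b c * bondWeight x y c d * leftRate l ε lam a b c d =
      bondWeight x y a b * bondWeight x y b c * bondWeight x y c d *
        (flowPotential l ε lam a b c - flowPotential l ε lam b c d) := by
  have mirrored := rightRate_netFlow (x := x) hy l lam d c b a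
  rw [flowPotential_reverse _ _ _ c b a, flowPotential_reverse _ _ _ d c b,
    bondWeight_comm _ _ c b] at mirrored
  rw [leftRate_eq_rightRate_reverse, leftRate_eq_rightRate_reverse, bondWeight_comm _ _ a c,
    bondWeight_comm _ _ c b, bondWeight_comm _ _ b d, bondWeight_comm _ _ a b,
    bondWeight_comm _ _ c d]
  linear_combination mirrored

end Rates

end KLS

theorem stmt_11_general {R : Type*} [CommRing R] {L : ℕ} [NeZero L] (hL : 3 ≤ L)
    (r l κ lam : R) {x y ε : R} (hy : y * (1 + ε) = 1 - ε) (f : (ZMod L → Bool) → R) :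
    ∑ η : ZMod L → Bool, (∏ k, KLS.bondWeight x y (η k) (η (k + 1))) *
      ∑ k, (KLS.rightRate r ε κ (η (k - 1)) (η k) (η (k + 1)) (η (k + 2)) +
          KLS.leftRate l ε lam (η (k - 1)) (η k) (η (k + 1)) (η (k + 2))) *
        (f (η ∘ Equiv.swap k (k + 1)) - f η) = 0 :=
  KLS.sum_prod_bonds_mul_generator_eq_zero_of_gradient hL (KLS.bondWeight x y)
    (fun a b c d => KLS.rightRate r ε κ a b c d + KLS.leftRate l ε lam a b c d)
    (fun a b c => KLS.flowPotential r ε κ a b c - KLS.flowPotential l ε lam a b c)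
    (fun a b c d => by
      linear_combination KLS.rightRate_netFlow (x := x) hy r κ a b c d +
        KLS.leftRate_netFlow (x := x) hy l lam a b c d) f

/-- Invariance of the periodic Ising measure (with e^{-J} = (1-ε)/(1+ε)) for the
generalized periodic KLS model on the torus ℤ/Lℤ, for every chemical potential φ. -/
theorem stmt_11 (L : ℕ) [NeZero L] (hL : 4 ≤ L) (r ℓe κ lam ε : ℝ)
    (hr : 0 ≤ r) (hl : 0 ≤ ℓe)
    (hκ : -1 < κ ∧ κ < 1) (hlam : -1 < lam ∧ lam < 1) (hε : -1 < ε ∧ ε < 1) :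
    ∀ φ : ℝ,
    let x : ℝ := Real.exp (φ / 2)
    let y : ℝ := (1 - ε) / (1 + ε)
    let ev : Bool → ℝ := fun b => if b then 1 else 0
    -- unnormalized Ising weight exp(-J Σ η_kη_{k+1} + φ Σ η_k), y = e^{-J}, x = e^{φ/2}
    let W : (ZMod L → Bool) → ℝ := fun η => ∏ k : ZMod L,
      ((if η k then x else 1) * (if η (k+1) then x else 1) *
        (if η k && η (k+1) then y else 1))
    let swap : ZMod L → (ZMod L → Bool) → (ZMod L → Bool) := fun k η j =>
      if j = k then η (k+1) else if j = k+1 then η k else η j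
    let rrate : ZMod L → (ZMod L → Bool) → ℝ := fun k η =>
      ev (η k) * (1 - ev (η (k+1))) *
        (r*(1+κ) + r*(ε-κ)*ev (η (k-1)) - r*(ε+κ)*ev (η (k+2)))
    let lrate : ZMod L → (ZMod L → Bool) → ℝ := fun k η =>
      (1 - ev (η k)) * ev (η (k+1)) *
        (ℓe*(1+lam) - ℓe*(ε+lam)*ev (η (k-1)) + ℓe*(ε-lam)*ev (η (k+2)))
    ∀ f : (ZMod L → Bool) → ℝ,
      ∑ η : ZMod L → Bool,
        W η * (∑ k : ZMod L, (rrate k η + lrate k η) * (f (swap k η) - f η)) = 0 := by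
  intro φ x y ev W swap rrate lrate f
  have hswap (k η) : swap k η = η ∘ Equiv.swap k (k + 1) := funext fun j => by
    simp only [swap, Function.comp_apply, Equiv.swap_apply_def, apply_ite η]
  simp only [hswap]
  exact stmt_11_general (by omega) r ℓe κ lam (div_mul_cancel₀ _ (by linarith [hε.1])) f
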